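/- arXiv:1904.01182 — 2 statements merged into one kernel-verified Lean document; each statement's English description precedes it below -/
import Mathlib

section
/- Let $A \in \mathbb{C}^{n\times n}$ be such that $\Gamma_{t,\mathbb{Q}}$-style count $\Sigma_t(A) \geq 2^{(n^2/t)^t}$ for $t = n^{1-1/(2d)}$, where the entries of $A$ are distinct powers of 2 indexed by a $t$-wise Sidon set. Then any factorization $A = P_1 \cdots P_d$ with matrices of dimensions at most $n^2 \times n^2$ has total sparsity more than $n^{1+1/(2d)}/2$ (for sufficiently large $n$ and constant $d \ge 2$). -/
open Matrix

noncomputable def chainProd {E : Type*} [Semiring E] :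
    (d : ℕ) → (dims : Fin (d + 1) → ℕ) →
    ((i : Fin d) → Matrix (Fin (dims i.castSucc)) (Fin (dims i.succ)) E) →
    Matrix (Fin (dims ⟨0, Nat.succ_pos d⟩)) (Fin (dims (Fin.last d))) E
  | 0, _, _ => Matrix.of fun i j => if (i : ℕ) = (j : ℕ) then 1 else 0
  | d + 1, dims, P =>
      P ⟨0, Nat.succ_pos d⟩ * chainProd d (fun i => dims i.succ) (fun i => P i.succ)


section Helpers

open MvPolynomial

theorem chainProd_map {E F : Type*} [Semiring E] [Semiring F] (f : E →+* F) :
    ∀ (d : ℕ) (dims : Fin (d + 1) → ℕ)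
      (P : (i : Fin d) → Matrix (Fin (dims i.castSucc)) (Fin (dims i.succ)) E) (a b),
      f (chainProd d dims P a b) = chainProd d dims (fun i => (P i).map f) a b := by
  intro d
  induction d with
  | zero =>
    intro dims P a b
    simp only [chainProd, Matrix.of_apply]
    split_ifs <;> simp
  | succ d ih =>
    intro dims P a b
    simp only [chainProd, Matrix.mul_apply, map_sum, map_mul]
    refine Finset.sum_congr rfl fun c _ => ?_
    rw [ih]
    rfl

theorem chainProd_homog {σ : Type*} :
    ∀ (d : ℕ) (dims : Fin (d + 1) → ℕ)
      (P : (i : Fin d) → Matrix (Fin (dims i.castSucc)) (Fin (dims i.succ)) (MvPolynomial σ ℕ)),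
      (∀ i a b, (P i a b).IsHomogeneous 1) →
      ∀ a b, (chainProd d dims P a b).IsHomogeneous d := by
  intro d
  induction d with
  | zero =>
    intro dims P _ a b
    simp only [chainProd, Matrix.of_apply]
    split_ifs
    · exact isHomogeneous_one _ _
    · exact isHomogeneous_zero _ _ _
  | succ d ih =>
    intro dims P hP a b
    simp only [chainProd, Matrix.mul_apply]
    refine IsHomogeneous.sum _ _ _ fun c _ => ?_
    have h := (hP ⟨0, Nat.succ_pos d⟩ a c).mul
      (ih (fun i => dims i.succ) (fun i => P i.succ) (fun i a b => hP i.succ a b) c b)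
    have e : 1 + d = d + 1 := add_comm 1 d
    rw [e] at h
    exact h

theorem chainProd_le (D : ℕ) :
    ∀ (d : ℕ) (dims : Fin (d + 1) → ℕ)
      (P : (i : Fin d) → Matrix (Fin (dims i.castSucc)) (Fin (dims i.succ)) ℕ),
      (∀ i a b, P i a b ≤ 1) → (∀ i : Fin d, dims i.succ ≤ D) →
      ∀ a b, chainProd d dims P a b ≤ D ^ d := by
  intro d
  induction d with
  | zero =>
    intro dims P _ _ a b
    simp only [chainProd, Matrix.of_apply]
    split_ifs <;> simp
  | succ d ih =>
    intro dims P hP hD a b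
    simp only [chainProd, Matrix.mul_apply]
    calc _ ≤ ∑ c : Fin (dims (Fin.succ ⟨0, Nat.succ_pos d⟩)), D ^ d := by
          refine Finset.sum_le_sum fun c _ => ?_
          have h := Nat.mul_le_mul (hP ⟨0, Nat.succ_pos d⟩ a c)
            (ih (fun i => dims i.succ) (fun i => P i.succ) (fun i a b => hP i.succ a b)
              (fun i => hD i.succ) c b)
          rw [one_mul] at h
          exact h
      _ = dims (Fin.succ ⟨0, Nat.succ_pos d⟩) * D ^ d := by
          rw [Finset.sum_const, Finset.card_univ, Fintype.card_fin, smul_eq_mul]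
      _ ≤ D * D ^ d := Nat.mul_le_mul_right _ (hD _)
      _ = D ^ (d + 1) := by ring

theorem coeff_le_eval_one {σ : Type*} (p : MvPolynomial σ ℕ) (m : σ →₀ ℕ) :
    p.coeff m ≤ eval (fun _ => 1) p := by
  rw [eval_eq]
  by_cases h : m ∈ p.support
  · simp only [one_pow, Finset.prod_const_one, mul_one]
    exact Finset.single_le_sum (f := fun d => p.coeff d) (fun _ _ => Nat.zero_le _) h
  · rw [notMem_support_iff.mp h]; exact Nat.zero_le _

theorem aeval_homog {σ : Type*} [Fintype σ] [DecidableEq σ] (v : σ → ℂ) (k : ℕ)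
    (p : MvPolynomial σ ℕ) (hp : p.IsHomogeneous k) :
    aeval v p = ∑ m ∈ Finset.finsuppAntidiag (Finset.univ : Finset σ) k,
      ((p.coeff m : ℕ) : ℂ) * ∏ i, v i ^ m i := by
  rw [aeval_def, eval₂_eq']
  simp only [eq_natCast]
  refine Finset.sum_subset ?_ ?_
  · intro m hm
    have := hp (mem_support_iff.mp hm)
    rw [Finset.mem_finsuppAntidiag]
    refine ⟨?_, Finset.subset_univ _⟩
    rw [← this]
    simp [Finsupp.weight_apply, Finsupp.sum_fintype]
  · intro m _ hm
    rw [notMem_support_iff.mp hm]; simp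

theorem ncard_le {σ : Type*} [Fintype σ] [DecidableEq σ] (v : σ → ℂ) (k N : ℕ) (V : Set ℂ)
    (hV : ∀ x ∈ V, ∃ p : MvPolynomial σ ℕ, p.IsHomogeneous k ∧ eval (fun _ => 1) p ≤ N ∧
      x = aeval v p) :
    V.ncard ≤ (N + 1) ^ ((Fintype.card σ + k - 1).choose k) := by
  let I := Finset.finsuppAntidiag (Finset.univ : Finset σ) k
  let g : (I → Fin (N + 1)) → ℂ := fun c => ∑ m : I, ((c m : ℕ) : ℂ) * ∏ i, v i ^ m.1 i
  have hsub : V ⊆ Set.range g := by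
    intro x hx
    obtain ⟨p, hp, hN, rfl⟩ := hV x hx
    refine ⟨fun m => ⟨p.coeff m.1, Nat.lt_succ_of_le ((coeff_le_eval_one p m.1).trans hN)⟩, ?_⟩
    rw [aeval_homog v k p hp]
    exact Finset.sum_coe_sort I (fun m => ((p.coeff m : ℕ) : ℂ) * ∏ i, v i ^ m i)
  have h1 : V.ncard ≤ (Set.range g).ncard := Set.ncard_le_ncard hsub (Set.finite_range g)
  have h2 : (Set.range g).ncard ≤ Nat.card (I → Fin (N + 1)) := by
    rw [← Nat.card_coe_set_eq]
    exact Finite.card_range_le g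
  refine h1.trans (h2.trans ?_)
  have h3 : I.card = (Fintype.card σ + k - 1).choose k := by
    have := Finset.card_finsuppAntidiag_nat_eq_choose (s := (Finset.univ : Finset σ)) k
    simpa using this
  rw [Nat.card_eq_fintype_card, Fintype.card_fun, Fintype.card_fin, Fintype.card_coe, h3]

theorem sigma_upper (d n t : ℕ) (A : Matrix (Fin n) (Fin n) ℂ)
    (dims : Fin (d + 1) → ℕ) (h0 : dims ⟨0, Nat.succ_pos d⟩ = n)
    (hlast : dims (Fin.last d) = n)
    (P : (i : Fin d) → Matrix (Fin (dims i.castSucc)) (Fin (dims i.succ)) ℂ)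
    (hD : ∀ i : Fin d, dims i.succ ≤ n ^ 2)
    (hA : ∀ i j, A i j = chainProd d dims P (Fin.cast h0.symm i) (Fin.cast hlast.symm j)) :
    Set.ncard {x : ℂ | ∃ S : Finset ℂ,
            (↑S ⊆ {y : ℂ | ∃ T : Finset (Fin n × Fin n), T.card = t ∧
              y = ∏ p ∈ T, A p.1 p.2}) ∧ x = ∑ y ∈ S, y} ≤
      ((n ^ 2) ^ t * ((n ^ 2) ^ d) ^ t + 1) ^
      (((∑ i, Set.ncard {p : Fin (dims i.castSucc) × Fin (dims i.succ) |
              P i p.1 p.2 ≠ 0}) + d * t - 1).choose (d * t)) := by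
  classical
  let σ := Σ i : Fin d, {p : Fin (dims i.castSucc) × Fin (dims i.succ) // P i p.1 p.2 ≠ 0}
  have hσ : Fintype.card σ = ∑ i, Set.ncard {p : Fin (dims i.castSucc) × Fin (dims i.succ) |
              P i p.1 p.2 ≠ 0} := by
    rw [Fintype.card_sigma]
    refine Finset.sum_congr rfl fun i _ => ?_
    rw [← Nat.card_coe_set_eq, Nat.card_eq_fintype_card]
    rfl
  rw [← hσ]
  let v : σ → ℂ := fun q => P q.1 q.2.1.1 q.2.1.2
  let Q : (i : Fin d) → Matrix (Fin (dims i.castSucc)) (Fin (dims i.succ)) (MvPolynomial σ ℕ) :=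
    fun i => Matrix.of fun a b => if h : P i a b ≠ 0 then X ⟨i, ⟨(a, b), h⟩⟩ else 0
  let B : Fin n × Fin n → MvPolynomial σ ℕ :=
    fun p => chainProd d dims Q (Fin.cast h0.symm p.1) (Fin.cast hlast.symm p.2)
  have hBh : ∀ p, (B p).IsHomogeneous d := by
    intro p
    refine chainProd_homog d dims Q ?_ _ _
    intro i a b
    simp only [Q, Matrix.of_apply]
    split_ifs
    · exact isHomogeneous_X _ _
    · exact isHomogeneous_zero _ _ _
  have hBe : ∀ p, eval (fun _ => 1) (B p) ≤ (n ^ 2) ^ d := by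
    intro p
    simp only [B]
    rw [chainProd_map]
    refine chainProd_le _ _ _ _ ?_ hD _ _
    intro i a b
    simp only [Q, Matrix.map_apply, Matrix.of_apply]
    split_ifs <;> simp
  have hBA : ∀ p, aeval v (B p) = A p.1 p.2 := by
    intro p
    rw [hA]
    simp only [B]
    have := chainProd_map (aeval v : MvPolynomial σ ℕ →ₐ[ℕ] ℂ).toRingHom d dims Q
      (Fin.cast h0.symm p.1) (Fin.cast hlast.symm p.2)
    refine Eq.trans this ?_
    congr 1
    funext i
    ext a b
    by_cases h : P i a b = 0
    · simp [Q, h]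
    · simp [Q, h, v]
  refine ncard_le v (d * t) _ _ ?_
  rintro x ⟨S, hS, rfl⟩
  have hS' : ∀ y ∈ S, ∃ T : Finset (Fin n × Fin n), T.card = t ∧ y = ∏ p ∈ T, A p.1 p.2 :=
    fun y hy => hS hy
  choose! T hT using hS'
  have hScard : S.card ≤ (n ^ 2) ^ t := by
    have hsub : S ⊆ ((Finset.univ : Finset (Fin n × Fin n)).powersetCard t).image
        (fun T => ∏ p ∈ T, A p.1 p.2) := by
      intro y hy
      rw [Finset.mem_image]
      exact ⟨T y, by simp [Finset.mem_powersetCard, (hT y hy).1], (hT y hy).2.symm⟩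
    calc S.card ≤ _ := Finset.card_le_card hsub
      _ ≤ _ := Finset.card_image_le
      _ = (n ^ 2).choose t := by simp [sq]
      _ ≤ _ := Nat.choose_le_pow _ _
  refine ⟨∑ y ∈ S, ∏ p ∈ T y, B p, ?_, ?_, ?_⟩
  · refine IsHomogeneous.sum _ _ _ fun y hy => ?_
    have := IsHomogeneous.prod (T y) B (fun _ => d) (fun p _ => hBh p)
    simpa [(hT y hy).1, mul_comm] using this
  · rw [map_sum]
    calc _ ≤ ∑ y ∈ S, ((n ^ 2) ^ d) ^ t := by
          refine Finset.sum_le_sum fun y hy => ?_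
          rw [map_prod, ← (hT y hy).1]
          exact Finset.prod_le_pow_card _ _ _ fun p _ => hBe p
      _ = S.card * ((n ^ 2) ^ d) ^ t := by simp
      _ ≤ _ := Nat.mul_le_mul_right _ hScard
  · rw [map_sum]
    refine Finset.sum_congr rfl fun y hy => ?_
    rw [map_prod]
    simp only [hBA]
    exact (hT y hy).2

/-- Binomial bound. -/
theorem choose_bound (s k : ℕ) (hk : 0 < k) :
    (((s + k - 1).choose k : ℕ) : ℝ) ≤ (Real.exp 1 * (s + k) / k) ^ k := by
  have h1 : (((s + k - 1).choose k : ℕ) : ℝ) ≤ ((s + k - 1 : ℕ) : ℝ) ^ k / (k.factorial : ℝ) :=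
    Nat.choose_le_pow_div k (s + k - 1)
  have h2 : ((s + k - 1 : ℕ) : ℝ) ≤ (s : ℝ) + k := by
    exact_mod_cast Nat.sub_le _ _
  have h3 : (k : ℝ) ^ k / (k.factorial : ℝ) ≤ Real.exp k :=
    Real.pow_div_factorial_le_exp (k : ℝ) (Nat.cast_nonneg k) k
  have hk' : (0 : ℝ) < k := by exact_mod_cast hk
  have h4 : Real.exp k = Real.exp 1 ^ k := by rw [← Real.exp_nat_mul, mul_one]
  calc _ ≤ ((s + k - 1 : ℕ) : ℝ) ^ k / (k.factorial : ℝ) := h1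
    _ ≤ ((s : ℝ) + k) ^ k / (k.factorial : ℝ) := by gcongr
    _ = (((s : ℝ) + k) / k) ^ k * ((k : ℝ) ^ k / (k.factorial : ℝ)) := by
        rw [div_pow]; field_simp
    _ ≤ (((s : ℝ) + k) / k) ^ k * Real.exp 1 ^ k := by rw [← h4]; gcongr
    _ = _ := by rw [← mul_pow]; congr 1; ring

/-- The numeric comparison, in terms of `x = n ^ (1 / (2 d))`. -/
theorem numeric (d : ℕ) (hd : 2 ≤ d) (x : ℝ) (hx : (4 * 81 ^ d + 10 * d + 10 : ℝ) ≤ x)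
    (n t s : ℕ) (hn : (n : ℝ) = x ^ (2 * d)) (ht1 : x ^ (2 * d - 1) ≤ t)
    (ht2 : (t : ℝ) ≤ 2 * x ^ (2 * d - 1)) (htn : t ≤ n)
    (hs : (s : ℝ) ≤ x ^ (2 * d + 1) / 2) :
    (((2 * n * t * (d + 1) + 1) * ((s + d * t - 1).choose (d * t)) : ℕ) : ℝ)
      < ((n : ℝ) ^ 2 / t) ^ t := by
  have h81 : (0 : ℝ) < 81 ^ d := by positivity
  have hdR : (2 : ℝ) ≤ d := by exact_mod_cast hd
  have hx1 : 1 ≤ x := by linarith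
  have hx0 : 0 < x := by linarith
  have htx : x ≤ t := by
    refine le_trans ?_ ht1
    exact le_self_pow₀ hx1 (by omega)
  have ht0 : (0 : ℝ) < t := by linarith
  have ht0' : 0 < t := by exact_mod_cast ht0
  have hn1 : (1 : ℝ) ≤ n := by rw [hn]; exact one_le_pow₀ hx1
  have ht8 : 8 * d + 2 ≤ t := by
    have : ((8 * d + 2 : ℕ) : ℝ) ≤ t := by push_cast; linarith
    exact_mod_cast this
  have hpow : x ^ (2 * d) = x ^ (2 * d - 1) * x := by
    rw [← pow_succ]; congr 1; omega
  have hpow2 : x ^ (2 * d + 1) = x ^ (2 * d - 1) * x ^ 2 := by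
    rw [← pow_add]; congr 1; omega
  have hy0 : 0 < x ^ (2 * d - 1) := by positivity
  set y := x ^ (2 * d - 1) with hy
  -- the binomial coefficient
  have hM : (((s + d * t - 1).choose (d * t) : ℕ) : ℝ) ≤ (9 ^ d * (n : ℝ)) ^ t := by
    refine (choose_bound s (d * t) (by positivity)).trans ?_
    rw [pow_mul]
    have hb : Real.exp 1 * ((s : ℝ) + ((d * t : ℕ) : ℝ)) / ((d * t : ℕ) : ℝ) ≤ 9 * x ^ 2 := by
      push_cast
      rw [div_le_iff₀ (by positivity)]
      have he : Real.exp 1 ≤ 3 := by linarith [Real.exp_one_lt_d9]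
      have hx2 : 1 ≤ x ^ 2 := one_le_pow₀ hx1
      have hsb : (s : ℝ) ≤ t * x ^ 2 := by
        have : y * x ^ 2 ≤ t * x ^ 2 := by gcongr
        have : 0 ≤ y * x ^ 2 := by positivity
        linarith
      have h1 : (t : ℝ) * x ^ 2 ≤ d * t * x ^ 2 := by
        have : 0 ≤ (t : ℝ) * x ^ 2 := by positivity
        nlinarith
      have h2 : (d * t : ℝ) ≤ d * t * x ^ 2 := le_mul_of_one_le_right (by positivity) hx2
      calc Real.exp 1 * ((s : ℝ) + d * t) ≤ 3 * (d * t * x ^ 2 + d * t * x ^ 2) := by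
            gcongr; linarith
        _ ≤ 9 * x ^ 2 * (d * t) := by
            have : 0 ≤ (d : ℝ) * t * x ^ 2 := by positivity
            linarith
    have : (9 * x ^ 2) ^ d = 9 ^ d * (n : ℝ) := by
      rw [mul_pow, hn, pow_mul]
    rw [← this]
    gcongr
  -- the logarithmic factor
  have hL : ((2 * n * t * (d + 1) + 1 : ℕ) : ℝ) ≤ 5 * d * (n : ℝ) ^ 2 := by
    push_cast
    have htn' : (t : ℝ) ≤ n := by exact_mod_cast htn
    have h1 : (n : ℝ) * t ≤ n ^ 2 := by rw [sq]; gcongr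
    have h2 : (1 : ℝ) ≤ (n : ℝ) ^ 2 := one_le_pow₀ hn1
    have h3 : (n : ℝ) * t * (d + 1) ≤ n ^ 2 * (d + 1) := by gcongr
    nlinarith
  -- the right hand side
  set c : ℝ := 2 * 9 ^ d with hc
  have hc0 : 0 < c := by positivity
  have hR : 9 ^ d * (n : ℝ) * (x / c) ≤ (n : ℝ) ^ 2 / t := by
    rw [le_div_iff₀ ht0]
    have : 9 ^ d * (n : ℝ) * (x / c) = n * x / 2 := by rw [hc]; field_simp
    rw [this]
    calc (n : ℝ) * x / 2 * t ≤ n * x / 2 * (2 * y) := by gcongr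
      _ = n * (y * x) := by ring
      _ = n ^ 2 := by rw [← hpow, ← hn]; ring
  have hc2 : c ^ 2 = 4 * 81 ^ d := by
    rw [hc, mul_pow, ← pow_mul, mul_comm d 2, pow_mul]; norm_num
  have hxc : x ≤ (x / c) ^ 2 := by
    rw [div_pow, le_div_iff₀ (by positivity), hc2, sq]
    gcongr
    linarith
  have hxc1 : 1 ≤ x / c := by
    by_contra h
    push Not at h
    have : (x / c) ^ 2 < 1 := pow_lt_one₀ (by positivity) h (by norm_num)
    linarith
  have hbig : 5 * d * (n : ℝ) ^ 2 < (x / c) ^ t := by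
    calc 5 * d * (n : ℝ) ^ 2 < x * (n : ℝ) ^ 2 := by
          have : (5 * d : ℝ) < x := by linarith
          gcongr
      _ = x ^ (4 * d + 1) := by rw [hn, ← pow_mul, pow_succ, mul_comm]; congr 2; ring
      _ ≤ ((x / c) ^ 2) ^ (4 * d + 1) := by gcongr
      _ = (x / c) ^ (8 * d + 2) := by rw [← pow_mul]; congr 1; ring
      _ ≤ (x / c) ^ t := pow_le_pow_right₀ hxc1 ht8
  rw [Nat.cast_mul]
  calc _ ≤ (5 * d * (n : ℝ) ^ 2) * (9 ^ d * (n : ℝ)) ^ t := by gcongr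
    _ < (x / c) ^ t * (9 ^ d * (n : ℝ)) ^ t := by gcongr
    _ = (9 ^ d * (n : ℝ) * (x / c)) ^ t := by rw [← mul_pow]; congr 1; ring
    _ ≤ _ := by gcongr

end Helpers

theorem stmt16 (d : ℕ) (hd : 2 ≤ d) :
    ∃ n₀ : ℕ, ∀ n ≥ n₀, ∀ t : ℕ,
      t = ⌈(n : ℝ) ^ ((1 : ℝ) - 1 / (2 * d))⌉₊ →
      ∀ A : Matrix (Fin n) (Fin n) ℂ,
        (∃ e : Fin n × Fin n → ℕ, (∀ i j, A i j = 2 ^ e (i, j)) ∧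
          ∀ T T' : Finset (Fin n × Fin n), T.card = t → T'.card = t →
            (∑ p ∈ T, e p) = (∑ p ∈ T', e p) → T = T') →
        (2 : ℝ) ^ (((n : ℝ) ^ 2 / t) ^ t) ≤
          (Set.ncard {x : ℂ | ∃ S : Finset ℂ,
            (↑S ⊆ {y : ℂ | ∃ T : Finset (Fin n × Fin n), T.card = t ∧
              y = ∏ p ∈ T, A p.1 p.2}) ∧ x = ∑ y ∈ S, y} : ℝ) →
        ∀ (dims : Fin (d + 1) → ℕ) (h0 : dims ⟨0, Nat.succ_pos d⟩ = n)
          (hlast : dims (Fin.last d) = n)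
          (P : (i : Fin d) → Matrix (Fin (dims i.castSucc)) (Fin (dims i.succ)) ℂ),
          (∀ i : Fin d, dims i.castSucc ≤ n ^ 2) →
          (∀ i : Fin d, dims i.succ ≤ n ^ 2) →
          (∀ i j, A i j = chainProd d dims P (Fin.cast h0.symm i) (Fin.cast hlast.symm j)) →
          (n : ℝ) ^ ((1 : ℝ) + 1 / (2 * d)) / 2 <
            ((∑ i, Set.ncard {p : Fin (dims i.castSucc) × Fin (dims i.succ) |
              P i p.1 p.2 ≠ 0} : ℕ) : ℝ) := by
  refine ⟨(4 * 81 ^ d + 10 * d + 10) ^ (2 * d), ?_⟩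
  intro n hn t ht A _ hlow dims h0 hlast P _ hD hA
  by_contra hcon
  push Not at hcon
  have hup := sigma_upper d n t A dims h0 hlast P hD hA
  set s := ∑ i, Set.ncard {p : Fin (dims i.castSucc) × Fin (dims i.succ) |
              P i p.1 p.2 ≠ 0} with hs
  have hdR : (2 : ℝ) ≤ d := by exact_mod_cast hd
  have hd0 : (d : ℝ) ≠ 0 := by linarith
  have hnR : ((4 * 81 ^ d + 10 * d + 10 : ℝ)) ^ (2 * d) ≤ n := by exact_mod_cast hn
  set x : ℝ := (n : ℝ) ^ (1 / (2 * (d : ℝ))) with hxdef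
  have hn0 : (0 : ℝ) < n := lt_of_lt_of_le (by positivity) hnR
  have hx0 : 0 < x := Real.rpow_pos_of_pos hn0 _
  have hxpow : ∀ k : ℕ, x ^ k = (n : ℝ) ^ ((k : ℝ) / (2 * d)) := by
    intro k
    rw [hxdef, ← Real.rpow_natCast, ← Real.rpow_mul hn0.le]
    congr 1; ring
  have hnx : (n : ℝ) = x ^ (2 * d) := by
    rw [hxpow]; push_cast
    rw [div_self (by positivity), Real.rpow_one]
  have hx : (4 * 81 ^ d + 10 * d + 10 : ℝ) ≤ x := by
    rw [hnx] at hnR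
    exact le_of_pow_le_pow_left₀ (by omega) hx0.le hnR
  have hx1 : 1 ≤ x := by
    have : (0 : ℝ) < 81 ^ d := by positivity
    linarith
  have e1 : (n : ℝ) ^ ((1 : ℝ) - 1 / (2 * d)) = x ^ (2 * d - 1) := by
    rw [hxpow, Nat.cast_sub (by omega)]; push_cast
    congr 1; field_simp
  have e2 : (n : ℝ) ^ ((1 : ℝ) + 1 / (2 * d)) = x ^ (2 * d + 1) := by
    rw [hxpow]; push_cast
    congr 1; field_simp
  rw [e1] at ht
  rw [e2] at hcon
  have hy1 : 1 ≤ x ^ (2 * d - 1) := one_le_pow₀ hx1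
  have ht1 : x ^ (2 * d - 1) ≤ t := by rw [ht]; exact Nat.le_ceil _
  have ht2 : (t : ℝ) ≤ 2 * x ^ (2 * d - 1) := by
    have := Nat.ceil_lt_add_one (a := x ^ (2 * d - 1)) (by positivity)
    rw [← ht] at this
    linarith
  have htn : t ≤ n := by
    rw [ht, Nat.ceil_le, hnx]
    exact pow_le_pow_right₀ hx1 (by omega)
  have hnum := numeric d hd x hx n t s hnx ht1 ht2 htn hcon
  set M := (s + d * t - 1).choose (d * t) with hM
  have hN : (n ^ 2) ^ t * ((n ^ 2) ^ d) ^ t + 1 ≤ 2 ^ (2 * n * t * (d + 1) + 1) := by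
    have h1 : (n ^ 2) ^ t * ((n ^ 2) ^ d) ^ t = n ^ (2 * t * (d + 1)) := by
      rw [← pow_mul, ← pow_mul, ← pow_mul, ← pow_add]; congr 1; ring
    have h2 : n ^ (2 * t * (d + 1)) ≤ 2 ^ (2 * n * t * (d + 1)) := by
      calc n ^ (2 * t * (d + 1)) ≤ (2 ^ n) ^ (2 * t * (d + 1)) :=
            Nat.pow_le_pow_left Nat.lt_two_pow_self.le _
        _ = _ := by rw [← pow_mul]; congr 1; ring
    have h3 : 1 ≤ 2 ^ (2 * n * t * (d + 1)) := Nat.one_le_two_pow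
    rw [h1, pow_succ]; omega
  have hup2 := hup.trans (Nat.pow_le_pow_left hN M)
  rw [← pow_mul] at hup2
  have hup3 := hlow.trans (Nat.cast_le (α := ℝ) |>.mpr hup2)
  rw [Nat.cast_pow, Nat.cast_ofNat, ← Real.rpow_natCast 2 ((2 * n * t * (d + 1) + 1) * M)] at hup3
  have := (Real.rpow_le_rpow_left_iff (by norm_num : (1 : ℝ) < 2)).mp hup3
  linarith
end

section
/- Define $A_n \in \mathbb{Z}^{n\times n}$ by $(A_n)_{i,j} = 2^{2^{(n+1)(i-1)+j}}$. Then for $t = n^2/4$, the number $\Sigma_t(A_n)$ of distinct sums of distinct $t$-wise products of entries of $A_n$ is at least $2^{\binom{n^2}{n^2/4}}$; consequently (using the upper bound $\Sigma_t \le 2^{2n^3(e^2 \cdot 4s/n^2)^{n^2/4}}$ for any factorization $A_n = PQ$ of total sparsity $s$), every factorization $A_n = PQ$ has total sparsity at least $n^2/100$. -/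
theorem aux_inj {α : Type*} (e : α → ℕ) (he : Function.Injective e) :
    Function.Injective (fun T : Finset α => ∑ p ∈ T, 2 ^ e p) := by
  intro S T h
  have h2 := Finset.geomSum_injective (le_refl 2)
    (a₁ := S.map ⟨e, he⟩) (a₂ := T.map ⟨e, he⟩) (by simpa using h)
  exact Finset.map_injective _ h2

theorem aux_inj2 {α : Type*} (e : α → ℕ) (he : Function.Injective e) :
    Function.Injective (fun F : Finset (Finset α) => ∑ T ∈ F, ∏ p ∈ T, (2 : ℚ) ^ 2 ^ e p) := by
  intro S T h
  apply aux_inj _ (aux_inj e he)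
  simp only [Finset.prod_pow_eq_pow_sum] at h
  exact_mod_cast h

theorem aux_count {V : Type*} [Fintype V] [DecidableEq V] (D : ℕ) :
    ((((Fintype.piFinset fun _ : V => Finset.range (D + 1)).filter
      fun d => ∑ v, d v ≤ D).card : ℕ) : ℝ) ≤ (6 / 5) ^ D * 6 ^ Fintype.card V := by
  set M := ((Fintype.piFinset fun _ : V => Finset.range (D + 1)).filter
      fun d => ∑ v, d v ≤ D)
  have h1 : (M.card : ℝ) * (5 / 6) ^ D ≤ ∑ d ∈ M, ∏ v, (5 / 6 : ℝ) ^ d v := by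
    rw [← nsmul_eq_mul]
    apply Finset.card_nsmul_le_sum
    intro d hd
    rw [Finset.prod_pow_eq_pow_sum]
    exact pow_le_pow_of_le_one (by norm_num) (by norm_num) (Finset.mem_filter.1 hd).2
  have h2 : ∑ d ∈ M, ∏ v, (5 / 6 : ℝ) ^ d v ≤
      ∑ d ∈ Fintype.piFinset fun _ : V => Finset.range (D + 1), ∏ v, (5 / 6 : ℝ) ^ d v := by
    apply Finset.sum_le_sum_of_subset_of_nonneg (Finset.filter_subset _ _)
    intros; positivity
  have h3 : ∑ d ∈ Fintype.piFinset fun _ : V => Finset.range (D + 1), ∏ v, (5 / 6 : ℝ) ^ d v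
      = ∏ _v : V, ∑ i ∈ Finset.range (D + 1), (5 / 6 : ℝ) ^ i :=
    (Finset.prod_univ_sum (fun _ : V => Finset.range (D + 1)) (fun _ i => (5 / 6 : ℝ) ^ i)).symm
  have h4 : ∑ i ∈ Finset.range (D + 1), (5 / 6 : ℝ) ^ i ≤ 6 := by
    rw [geom_sum_eq (by norm_num)]
    have : (0 : ℝ) < (5 / 6) ^ (D + 1) := by positivity
    rw [div_le_iff_of_neg (by norm_num)]
    linarith
  have h5 : ∏ _v : V, ∑ i ∈ Finset.range (D + 1), (5 / 6 : ℝ) ^ i ≤ 6 ^ Fintype.card V := by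
    rw [Finset.prod_const, Finset.card_univ]
    exact pow_le_pow_left₀ (Finset.sum_nonneg fun _ _ => by positivity) h4 _
  have h6 : (6 / 5 : ℝ) ^ D * (5 / 6) ^ D = 1 := by rw [← mul_pow]; norm_num
  have h7 : (M.card : ℝ) * (5 / 6) ^ D ≤ 6 ^ Fintype.card V := by linarith
  calc (M.card : ℝ) = (6 / 5 : ℝ) ^ D * ((M.card : ℝ) * (5 / 6) ^ D) := by
        linear_combination (-(M.card : ℝ)) * h6
    _ ≤ _ := by gcongr

theorem aux_num (N s : ℕ) (hs : 1 ≤ s) (h : 100 * s < N)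
    (H : (2 : ℝ) ^ N ≤ N ^ 2 * ((6 / 5) ^ (2 * N) * 6 ^ s)) : False := by
  have h1 : ∀ m : ℕ, 100 ≤ m → (m : ℝ) < (116 / 100) ^ m := by
    intro m hm
    induction m, hm using Nat.le_induction with
    | base => norm_num
    | succ k hk ih =>
      rw [pow_succ]; push_cast
      have : (100 : ℝ) ≤ k := by exact_mod_cast hk
      linarith
  have h2 := h1 N (by omega)
  have h3 : (6 : ℝ) ^ s ≤ (102 / 100) ^ N := by
    calc (6 : ℝ) ^ s ≤ ((102 / 100) ^ 100) ^ s := by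
          apply pow_le_pow_left₀ <;> norm_num
      _ = (102 / 100) ^ (100 * s) := by rw [pow_mul]
      _ ≤ _ := pow_le_pow_right₀ (by norm_num) h.le
  have h4 : (N : ℝ) ^ 2 < ((116 / 100) ^ N) ^ 2 := by gcongr
  have h5 : (N : ℝ) ^ 2 * ((6 / 5) ^ (2 * N) * 6 ^ s) <
      ((116 / 100) ^ N) ^ 2 * ((6 / 5) ^ (2 * N) * (102 / 100) ^ N) :=
    mul_lt_mul h4 (by gcongr) (by positivity) (by positivity)
  have h6 : (((116 / 100 : ℝ)) ^ N) ^ 2 * ((6 / 5) ^ (2 * N) * (102 / 100) ^ N) ≤ 2 ^ N := by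
    rw [← pow_mul, mul_comm N 2, pow_mul, pow_mul, ← mul_pow, ← mul_pow]
    apply pow_le_pow_left₀ <;> norm_num
  linarith

open MvPolynomial in
theorem aux_main {α V : Type*} [Fintype α] [DecidableEq α] [Fintype V] [DecidableEq V]
    (a : α → MvPolynomial V ℕ) (x : V → ℚ) (e : α → ℕ) (he : Function.Injective e)
    (hdeg : ∀ p, (a p).totalDegree ≤ 2)
    (hone : ∀ p, eval (fun _ => 1) (a p) ≤ Fintype.card V)
    (hx : ∀ p, aeval x (a p) = 2 ^ 2 ^ e p)
    (hs : 1 ≤ Fintype.card V) : Fintype.card α ≤ 100 * Fintype.card V := by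
  by_contra! hlt
  set N := Fintype.card α with hN
  set s := Fintype.card V with hsd
  let Φ : Finset (Finset α) → MvPolynomial V ℕ := fun F => ∑ T ∈ F, ∏ p ∈ T, a p
  have hΦ : Function.Injective Φ := by
    intro S T h
    apply aux_inj2 e he
    have := congrArg (aeval x) h
    simpa [Φ, map_sum, map_prod, hx] using this
  have hΦdeg : ∀ F, (Φ F).totalDegree ≤ 2 * N := by
    intro F
    apply (totalDegree_finsetSum _ _).trans
    apply Finset.sup_le
    intro T _
    apply (totalDegree_finsetProd _ _).trans
    apply (Finset.sum_le_card_nsmul _ _ 2 (fun p _ => hdeg p)).trans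
    have := Finset.card_le_univ T
    simp only [smul_eq_mul]
    omega
  have hΦone : ∀ F, eval (fun _ => 1) (Φ F) ≤ (s + 1) ^ N := by
    intro F
    calc eval (fun _ => 1) (Φ F) = ∑ T ∈ F, ∏ p ∈ T, eval (fun _ => 1) (a p) := by
          simp [Φ, map_sum, map_prod]
      _ ≤ ∑ T ∈ F, ∏ p ∈ T, s := by
          gcongr with T _ p _
          exact hone p
      _ ≤ ∑ T ∈ (Finset.univ : Finset α).powerset, ∏ p ∈ T, s := by
          apply Finset.sum_le_sum_of_subset
          intro T _; simp
      _ = (s + 1) ^ N := by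
          rw [← Finset.prod_add_one]
          simp [hN]
  have hcoeff : ∀ F d, (Φ F).coeff d ≤ (s + 1) ^ N := by
    intro F d
    refine le_trans ?_ (hΦone F)
    rw [eval_eq]
    simp only [one_pow, Finset.prod_const_one, mul_one]
    by_cases hd : d ∈ (Φ F).support
    · exact Finset.single_le_sum (f := fun d => (Φ F).coeff d) (fun _ _ => Nat.zero_le _) hd
    · rw [notMem_support_iff.1 hd]; exact Nat.zero_le _
  let M := ((Fintype.piFinset fun _ : V => Finset.range (2 * N + 1)).filter
      fun d => ∑ v, d v ≤ 2 * N)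
  let Ψ : Finset (Finset α) → (M → Fin ((s + 1) ^ N + 1)) := fun F d =>
    ⟨(Φ F).coeff (Finsupp.equivFunOnFinite.symm d.1), Nat.lt_succ_of_le (hcoeff F _)⟩
  have hout : ∀ F (d : V →₀ ℕ), (d : V → ℕ) ∉ M → (Φ F).coeff d = 0 := by
    intro F d hd
    by_contra hne
    apply hd
    have h1 : ∑ v, d v ≤ 2 * N := by
      have := (le_totalDegree (mem_support_iff.2 hne)).trans (hΦdeg F)
      rwa [Finsupp.sum_fintype _ _ (fun _ => rfl)] at this
    refine Finset.mem_filter.2 ⟨Fintype.mem_piFinset.2 fun v => Finset.mem_range.2 ?_, h1⟩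
    have := Finset.single_le_sum (f := fun v => d v) (fun _ _ => Nat.zero_le _) (Finset.mem_univ v)
    omega
  have hΨ : Function.Injective Ψ := by
    intro S T h
    apply hΦ
    ext d
    by_cases hd : (d : V → ℕ) ∈ M
    · have := congrArg Fin.val (congrFun h ⟨d, hd⟩)
      simpa [Ψ] using this
    · rw [hout S d hd, hout T d hd]
  have hcard := Fintype.card_le_of_injective Ψ hΨ
  rw [Fintype.card_finset, Fintype.card_finset, Fintype.card_fun, Fintype.card_fin,
    Fintype.card_coe] at hcard
  have hB : (s + 1) ^ N + 1 ≤ 2 ^ (N ^ 2) := by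
    have h1 : s + 1 ≤ 2 ^ s := Nat.lt_two_pow_self
    have h2 : (s + 1) ^ N ≤ 2 ^ (s * N) := by
      rw [pow_mul]; exact Nat.pow_le_pow_left h1 N
    have h3 : 1 ≤ 2 ^ (s * N) := Nat.one_le_two_pow
    calc (s + 1) ^ N + 1 ≤ 2 ^ (s * N + 1) := by rw [pow_succ]; omega
      _ ≤ _ := Nat.pow_le_pow_right (by norm_num) (by nlinarith)
  have h5 : 2 ^ 2 ^ N ≤ 2 ^ (N ^ 2 * M.card) := by
    rw [pow_mul]
    exact hcard.trans (Nat.pow_le_pow_left hB _)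
  have h6 : 2 ^ N ≤ N ^ 2 * M.card := (Nat.pow_le_pow_iff_right (by norm_num)).1 h5
  have h7 : (2 : ℝ) ^ N ≤ N ^ 2 * M.card := by exact_mod_cast h6
  apply aux_num N s hs hlt
  refine h7.trans ?_
  gcongr
  exact aux_count (V := V) (2 * N)

theorem stmt17 (n : ℕ) (hn : 0 < n)
    (A : Matrix (Fin n) (Fin n) ℚ)
    (hA : ∀ i j : Fin n, A i j = 2 ^ 2 ^ ((n + 1) * (i : ℕ) + ((j : ℕ) + 1))) :
    2 ^ Nat.choose (n ^ 2) (n ^ 2 / 4) ≤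
      Set.ncard {x : ℚ | ∃ S : Finset ℚ,
        (↑S ⊆ {y : ℚ | ∃ T : Finset (Fin n × Fin n), T.card = n ^ 2 / 4 ∧
          y = ∏ p ∈ T, A p.1 p.2}) ∧ x = ∑ y ∈ S, y} ∧
    ∀ (r : ℕ) (P : Matrix (Fin n) (Fin r) ℚ) (Q : Matrix (Fin r) (Fin n) ℚ),
      A = P * Q →
      (n : ℝ) ^ 2 / 100 ≤
        ((Set.ncard {p : Fin n × Fin r | P p.1 p.2 ≠ 0}
          + Set.ncard {p : Fin r × Fin n | Q p.1 p.2 ≠ 0} : ℕ) : ℝ) := by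
  classical
  let e : Fin n × Fin n → ℕ := fun p => (n + 1) * (p.1 : ℕ) + ((p.2 : ℕ) + 1)
  have hAe : ∀ p : Fin n × Fin n, A p.1 p.2 = 2 ^ 2 ^ e p := fun p => hA p.1 p.2
  have he : Function.Injective e := by
    rintro ⟨i, j⟩ ⟨k, l⟩ h
    simp only [e] at h
    have hj := j.2
    have hl := l.2
    have h1 : (i : ℕ) = k := by
      have := congrArg (· / (n + 1)) h
      beta_reduce at this
      rwa [Nat.mul_add_div (by omega), Nat.mul_add_div (by omega),
        Nat.div_eq_of_lt (by omega), Nat.div_eq_of_lt (by omega)] at this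
    rw [h1] at h
    ext
    · exact h1
    · show (j : ℕ) = l; omega
  constructor
  · set Y := {y : ℚ | ∃ T : Finset (Fin n × Fin n), T.card = n ^ 2 / 4 ∧
          y = ∏ p ∈ T, A p.1 p.2}
    have hY : Y.Finite := by
      apply (Set.finite_range (fun T : Finset (Fin n × Fin n) => ∏ p ∈ T, A p.1 p.2)).subset
      rintro y ⟨T, -, rfl⟩
      exact ⟨T, rfl⟩
    have hX : {x : ℚ | ∃ S : Finset ℚ, (↑S ⊆ Y) ∧ x = ∑ y ∈ S, y}.Finite := by
      apply ((hY.toFinset.powerset.image (fun S => ∑ y ∈ S, y)).finite_toSet).subset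
      rintro x ⟨S, hS, rfl⟩
      refine Finset.mem_coe.2 (Finset.mem_image.2 ⟨S, Finset.mem_powerset.2 ?_, rfl⟩)
      intro y hy
      exact hY.mem_toFinset.2 (hS hy)
    let Z := ((Finset.powersetCard (n ^ 2 / 4) (Finset.univ : Finset (Fin n × Fin n))).powerset).image
      (fun F => ∑ T ∈ F, ∏ p ∈ T, (2 : ℚ) ^ 2 ^ e p)
    have hZ : Z.card = 2 ^ Nat.choose (n ^ 2) (n ^ 2 / 4) := by
      rw [Finset.card_image_of_injective _ (aux_inj2 e he), Finset.card_powerset,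
        Finset.card_powersetCard]
      simp [sq]
    rw [← hZ, ← Set.ncard_coe_finset]
    refine Set.ncard_le_ncard ?_ hX
    intro x hx
    obtain ⟨F, hF, rfl⟩ := Finset.mem_image.1 (Finset.mem_coe.1 hx)
    have hF' := Finset.mem_powerset.1 hF
    refine ⟨F.image (fun T => ∏ p ∈ T, (2 : ℚ) ^ 2 ^ e p), ?_, ?_⟩
    · intro y hy
      obtain ⟨T, hT, rfl⟩ := Finset.mem_image.1 (Finset.mem_coe.1 hy)
      exact ⟨T, (Finset.mem_powersetCard.1 (hF' hT)).2, by simp only [hAe]⟩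
    · rw [Finset.sum_image]
      intro S _ T _ h
      have := aux_inj2 e he (a₁ := {S}) (a₂ := {T}) (by simpa using h)
      simpa using this
  · intro r P Q hPQ
    let VP := {p : Fin n × Fin r // P p.1 p.2 ≠ 0}
    let VQ := {p : Fin r × Fin n // Q p.1 p.2 ≠ 0}
    have hcP : Set.ncard {p : Fin n × Fin r | P p.1 p.2 ≠ 0} = Fintype.card VP := by
      rw [← Nat.card_eq_fintype_card]; rfl
    have hcQ : Set.ncard {p : Fin r × Fin n | Q p.1 p.2 ≠ 0} = Fintype.card VQ := by
      rw [← Nat.card_eq_fintype_card]; rfl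
    rw [hcP, hcQ, ← Fintype.card_sum]
    let a : Fin n × Fin n → MvPolynomial (VP ⊕ VQ) ℕ := fun p => ∑ k : Fin r,
      if h : P p.1 k ≠ 0 ∧ Q k p.2 ≠ 0 then
        MvPolynomial.X (Sum.inl ⟨(p.1, k), h.1⟩) * MvPolynomial.X (Sum.inr ⟨(k, p.2), h.2⟩)
      else 0
    let x : VP ⊕ VQ → ℚ := Sum.elim (fun p => P p.1.1 p.1.2) (fun p => Q p.1.1 p.1.2)
    have hx : ∀ p, MvPolynomial.aeval x (a p) = 2 ^ 2 ^ e p := by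
      intro p
      rw [← hAe, hPQ, Matrix.mul_apply, map_sum]
      refine Finset.sum_congr rfl fun k _ => ?_
      split_ifs with h
      · simp [x]
      · rw [map_zero]
        by_cases h1 : P p.1 k = 0
        · simp [h1]
        · have : Q k p.2 = 0 := by tauto
          simp [this]
    have hdeg : ∀ p, (a p).totalDegree ≤ 2 := by
      intro p
      apply MvPolynomial.totalDegree_finsetSum_le
      intro k _
      split_ifs with h
      · apply (MvPolynomial.totalDegree_mul _ _).trans
        simp [MvPolynomial.totalDegree_X]
      · simp
    have hone : ∀ p, MvPolynomial.eval (fun _ => 1) (a p) ≤ Fintype.card (VP ⊕ VQ) := by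
      intro p
      have h1 : MvPolynomial.eval (fun _ => 1) (a p) ≤
          ((Finset.univ : Finset (Fin r)).filter (fun k => P p.1 k ≠ 0)).card := by
        rw [Finset.card_filter, map_sum]
        refine Finset.sum_le_sum fun k _ => ?_
        by_cases h : P p.1 k ≠ 0 ∧ Q k p.2 ≠ 0
        · rw [dif_pos h, if_pos h.1]; simp
        · rw [dif_neg h]; simp
      refine h1.trans ?_
      rw [Fintype.card_sum, ← Fintype.card_subtype]
      refine le_trans ?_ (Nat.le_add_right _ _)
      refine Fintype.card_le_of_injective
        (fun k : {k : Fin r // P p.1 k ≠ 0} => (⟨(p.1, k.1), k.2⟩ : VP)) ?_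
      intro k l h
      have := congrArg (fun z : VP => z.1.2) h
      exact Subtype.ext this
    have hs : 1 ≤ Fintype.card (VP ⊕ VQ) := by
      by_contra hlt
      have h0 : IsEmpty (VP ⊕ VQ) := Fintype.card_eq_zero_iff.1 (by omega)
      let i : Fin n := ⟨0, hn⟩
      have h1 : ∀ k, P i k = 0 := by
        intro k
        by_contra h
        exact h0.false (Sum.inl ⟨(i, k), h⟩)
      have h2 : A i i = 0 := by
        rw [hPQ, Matrix.mul_apply]
        simp [h1]
      rw [hA] at h2
      exact absurd h2 (by positivity)
    have key := aux_main a x e he hdeg hone hx hs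
    rw [Fintype.card_prod, Fintype.card_fin] at key
    have key' : (n : ℝ) * n ≤ 100 * (Fintype.card (VP ⊕ VQ) : ℕ) := by exact_mod_cast key
    rw [sq]
    linarith
end
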